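/- Let α ∈ (0, 2), let A_x, B_y be Hermitian with A_x² ⪯ I and B_y² ⪯ I, and let ρ be a state on ℂ^m⊗ℂ^n. If Tr(Wρ) = 4 + α², then L_j ρ = 0 (as a matrix product) for each j ∈ {0, 1, 2}. -/

import Mathlib

/-!
The proof is a sum-of-squares decomposition. Writing `a` for `a ⊗ I` and `b` for `I ⊗ b`,
the cross terms of `(A₀ ± A₁)²` and `(B₀ ± B₁)²` cancel in `L₀² + L₁² + L₂²`, which leaves
`2 (4 + α²) I - 2 W = L₀² + L₁² + L₂² + 2 (I - A₀²) + 2 (I - A₁²) + α² (I - A₂²)`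
`  + 2 (I - B₀²) + 2 (I - B₁²) + α² (I - B₂²)` (`sos_identity`).
Pairing with `ρ` under the trace makes the left side vanish while every term on the right is
nonnegative, so `Tr (L_j² ρ) = 0`; for Hermitian `L` and `ρ = Cᴴ C` this trace is the squared
Frobenius norm of `L Cᴴ`, whence `L ρ = 0` (`mul_eq_zero_of_trace_sq`).
-/


open Matrix
open scoped Kronecker ComplexOrder

noncomputable section

variable {m n : ℕ}

/-- The Bell operator `W` with parameter `α`. -/
def bellOp (α : ℝ) (A₀ A₁ A₂ : Matrix (Fin m) (Fin m) ℂ)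
    (B₀ B₁ B₂ : Matrix (Fin n) (Fin n) ℂ) :
    Matrix (Fin m × Fin n) (Fin m × Fin n) ℂ :=
  A₀ ⊗ₖ (B₀ + B₁ + (α : ℂ) • B₂) + A₁ ⊗ₖ (B₀ + B₁ - (α : ℂ) • B₂) +
    (α : ℂ) • (A₂ ⊗ₖ (B₀ - B₁))

/-- `L₀ = (A₀+A₁)⊗I − I⊗(B₀+B₁)`. -/
def L₀op (A₀ A₁ : Matrix (Fin m) (Fin m) ℂ) (B₀ B₁ : Matrix (Fin n) (Fin n) ℂ) :
    Matrix (Fin m × Fin n) (Fin m × Fin n) ℂ :=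
  (A₀ + A₁) ⊗ₖ (1 : Matrix (Fin n) (Fin n) ℂ) - (1 : Matrix (Fin m) (Fin m) ℂ) ⊗ₖ (B₀ + B₁)

/-- `L₁ = (A₀−A₁)⊗I − α I⊗B₂`. -/
def L₁op (α : ℝ) (A₀ A₁ : Matrix (Fin m) (Fin m) ℂ) (B₂ : Matrix (Fin n) (Fin n) ℂ) :
    Matrix (Fin m × Fin n) (Fin m × Fin n) ℂ :=
  (A₀ - A₁) ⊗ₖ (1 : Matrix (Fin n) (Fin n) ℂ) -
    (α : ℂ) • ((1 : Matrix (Fin m) (Fin m) ℂ) ⊗ₖ B₂)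

/-- `L₂ = α A₂⊗I − I⊗(B₀−B₁)`. -/
def L₂op (α : ℝ) (A₂ : Matrix (Fin m) (Fin m) ℂ) (B₀ B₁ : Matrix (Fin n) (Fin n) ℂ) :
    Matrix (Fin m × Fin n) (Fin m × Fin n) ℂ :=
  (α : ℂ) • (A₂ ⊗ₖ (1 : Matrix (Fin n) (Fin n) ℂ)) -
    (1 : Matrix (Fin m) (Fin m) ℂ) ⊗ₖ (B₀ - B₁)

open scoped MatrixOrder in
lemma exists_eq_conjTranspose_mul_self {ι : Type*} [Fintype ι] {ρ : Matrix ι ι ℂ}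
    (hρ : ρ.PosSemidef) : ∃ C : Matrix ι ι ℂ, ρ = Cᴴ * C := by
  classical
  exact CStarAlgebra.nonneg_iff_eq_star_mul_self.mp hρ.nonneg

lemma sub_kron (A X : Matrix (Fin m) (Fin m) ℂ) (B : Matrix (Fin n) (Fin n) ℂ) :
    (A - X) ⊗ₖ B = A ⊗ₖ B - X ⊗ₖ B := by
  ext
  simp [sub_mul]

lemma kron_sub (A : Matrix (Fin m) (Fin m) ℂ) (B Y : Matrix (Fin n) (Fin n) ℂ) :
    A ⊗ₖ (B - Y) = A ⊗ₖ B - A ⊗ₖ Y := by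
  ext
  simp [mul_sub]

/-- The trace pairing of two positive semidefinite matrices is nonnegative. -/
lemma trace_mul_nonneg_of_posSemidef {ι : Type*} [Fintype ι] {X ρ : Matrix ι ι ℂ}
    (hX : X.PosSemidef) (hρ : ρ.PosSemidef) : 0 ≤ (X * ρ).trace := by
  obtain ⟨C, rfl⟩ := exists_eq_conjTranspose_mul_self hρ
  have h : (X * (Cᴴ * C)).trace = (C * X * Cᴴ).trace := by
    rw [← Matrix.mul_assoc, Matrix.trace_mul_comm, ← Matrix.mul_assoc]
  rw [h]
  exact (hX.mul_mul_conjTranspose_same C).trace_nonneg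

lemma posSemidef_sq_of_isHermitian {ι : Type*} [Fintype ι] {L : Matrix ι ι ℂ}
    (hL : L.IsHermitian) : (L * L).PosSemidef := by
  have h := Matrix.posSemidef_conjTranspose_mul_self L
  rwa [hL.eq] at h

lemma mul_eq_zero_of_trace_sq {ι : Type*} [Fintype ι] {L ρ : Matrix ι ι ℂ}
    (hL : L.IsHermitian) (hρ : ρ.PosSemidef) (h0 : (L * L * ρ).trace = 0) : L * ρ = 0 := by
  obtain ⟨C, rfl⟩ := exists_eq_conjTranspose_mul_self hρ
  have h : (L * L * (Cᴴ * C)).trace = ((L * Cᴴ)ᴴ * (L * Cᴴ)).trace := by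
    rw [Matrix.conjTranspose_mul, Matrix.conjTranspose_conjTranspose, hL.eq,
      ← Matrix.mul_assoc, Matrix.trace_mul_comm]
    simp only [Matrix.mul_assoc]
  rw [h, Matrix.trace_conjTranspose_mul_self_eq_zero_iff] at h0
  rw [← Matrix.mul_assoc, h0, Matrix.zero_mul]

lemma isHermitian_kron {A : Matrix (Fin m) (Fin m) ℂ} {B : Matrix (Fin n) (Fin n) ℂ}
    (hA : A.IsHermitian) (hB : B.IsHermitian) : (A ⊗ₖ B).IsHermitian := by
  rw [Matrix.IsHermitian, Matrix.conjTranspose_kronecker, hA.eq, hB.eq]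

lemma isHermitian_real_smul {ι : Type*} {A : Matrix ι ι ℂ} (α : ℝ)
    (hA : A.IsHermitian) : ((α : ℂ) • A).IsHermitian := by
  rw [Matrix.IsHermitian, Matrix.conjTranspose_smul, hA.eq]
  simp

/-- The sum-of-squares decomposition of `2 (4 + α²) I - 2 W`. -/
lemma sos_identity (α : ℝ) (A₀ A₁ A₂ : Matrix (Fin m) (Fin m) ℂ)
    (B₀ B₁ B₂ : Matrix (Fin n) (Fin n) ℂ) :
    (2 * (4 + (α : ℂ) ^ 2)) • (1 : Matrix (Fin m × Fin n) (Fin m × Fin n) ℂ)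
        - (2 : ℂ) • bellOp α A₀ A₁ A₂ B₀ B₁ B₂ =
      L₀op A₀ A₁ B₀ B₁ * L₀op A₀ A₁ B₀ B₁ + L₁op α A₀ A₁ B₂ * L₁op α A₀ A₁ B₂ +
        L₂op α A₂ B₀ B₁ * L₂op α A₂ B₀ B₁ +
      ((2 : ℂ) • ((1 - A₀ ^ 2) ⊗ₖ 1) + (2 : ℂ) • ((1 - A₁ ^ 2) ⊗ₖ 1) +
        ((α : ℂ) ^ 2) • ((1 - A₂ ^ 2) ⊗ₖ 1)) +
      ((2 : ℂ) • (1 ⊗ₖ (1 - B₀ ^ 2)) + (2 : ℂ) • (1 ⊗ₖ (1 - B₁ ^ 2)) +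
        ((α : ℂ) ^ 2) • (1 ⊗ₖ (1 - B₂ ^ 2))) := by
  simp only [bellOp, L₀op, L₁op, L₂op, Matrix.add_kronecker, Matrix.kronecker_add, sub_kron,
    kron_sub, mul_sub, sub_mul, Matrix.kronecker_smul, mul_add, add_mul,
    smul_mul_assoc, mul_smul_comm, ← Matrix.mul_kronecker_mul, mul_one, one_mul, pow_two,
    Matrix.one_kronecker_one]
  module

/-- for `α ∈ (0,2)`, Hermitian `A_x, B_y` with `A_x² ⪯ I`, `B_y² ⪯ I`, and a
state `ρ` with `Tr(Wρ) = 4 + α²`, each `L_j` annihilates the state: `L_j ρ = 0`. -/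
theorem maximal_violation_implies_Lj_kill_state (α : ℝ) (hα : α ∈ Set.Ioo (0 : ℝ) 2)
    (A₀ A₁ A₂ : Matrix (Fin m) (Fin m) ℂ) (B₀ B₁ B₂ : Matrix (Fin n) (Fin n) ℂ)
    (hA₀ : A₀.IsHermitian) (hA₁ : A₁.IsHermitian) (hA₂ : A₂.IsHermitian)
    (hB₀ : B₀.IsHermitian) (hB₁ : B₁.IsHermitian) (hB₂ : B₂.IsHermitian)
    (hA₀sq : (1 - A₀ ^ 2).PosSemidef) (hA₁sq : (1 - A₁ ^ 2).PosSemidef)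
    (hA₂sq : (1 - A₂ ^ 2).PosSemidef) (hB₀sq : (1 - B₀ ^ 2).PosSemidef)
    (hB₁sq : (1 - B₁ ^ 2).PosSemidef) (hB₂sq : (1 - B₂ ^ 2).PosSemidef)
    (ρ : Matrix (Fin m × Fin n) (Fin m × Fin n) ℂ)
    (hρ : ρ.PosSemidef) (hρtr : ρ.trace = 1)
    (hmax : (bellOp α A₀ A₁ A₂ B₀ B₁ B₂ * ρ).trace = ((4 + α ^ 2 : ℝ) : ℂ)) :
    L₀op A₀ A₁ B₀ B₁ * ρ = 0 ∧ L₁op α A₀ A₁ B₂ * ρ = 0 ∧ L₂op α A₂ B₀ B₁ * ρ = 0 := by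
  have hk := fun {X : Matrix (Fin m) (Fin m) ℂ} (hX : X.PosSemidef) =>
    trace_mul_nonneg_of_posSemidef
      (hX.kronecker (Matrix.PosSemidef.one (n := Fin n) (R := ℂ))) hρ
  have hkB := fun {X : Matrix (Fin n) (Fin n) ℂ} (hX : X.PosSemidef) =>
    trace_mul_nonneg_of_posSemidef
      ((Matrix.PosSemidef.one (n := Fin m) (R := ℂ)).kronecker hX) hρ
  have hL₀ : (L₀op A₀ A₁ B₀ B₁).IsHermitian :=
    (isHermitian_kron (hA₀.add hA₁) Matrix.isHermitian_one).sub
      (isHermitian_kron Matrix.isHermitian_one (hB₀.add hB₁))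
  have hL₁ : (L₁op α A₀ A₁ B₂).IsHermitian :=
    (isHermitian_kron (hA₀.sub hA₁) Matrix.isHermitian_one).sub
      (isHermitian_real_smul α (isHermitian_kron Matrix.isHermitian_one hB₂))
  have hL₂ : (L₂op α A₂ B₀ B₁).IsHermitian :=
    (isHermitian_real_smul α (isHermitian_kron hA₂ Matrix.isHermitian_one)).sub
      (isHermitian_kron Matrix.isHermitian_one (hB₀.sub hB₁))
  have s₀ := trace_mul_nonneg_of_posSemidef (posSemidef_sq_of_isHermitian hL₀) hρ
  have s₁ := trace_mul_nonneg_of_posSemidef (posSemidef_sq_of_isHermitian hL₁) hρ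
  have s₂ := trace_mul_nonneg_of_posSemidef (posSemidef_sq_of_isHermitian hL₂) hρ
  have h2 : (0 : ℂ) ≤ 2 := by norm_num
  have hα2 : (0 : ℂ) ≤ (α : ℂ) ^ 2 := by
    rw [← Complex.ofReal_pow]
    exact Complex.zero_le_real.mpr (sq_nonneg α)
  have hA := add_nonneg (add_nonneg (mul_nonneg h2 (hk hA₀sq)) (mul_nonneg h2 (hk hA₁sq)))
    (mul_nonneg hα2 (hk hA₂sq))
  have hB := add_nonneg (add_nonneg (mul_nonneg h2 (hkB hB₀sq)) (mul_nonneg h2 (hkB hB₁sq)))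
    (mul_nonneg hα2 (hkB hB₂sq))
  have key := congrArg (fun M => (M * ρ).trace) (sos_identity α A₀ A₁ A₂ B₀ B₁ B₂)
  simp only [sub_mul, add_mul, smul_mul_assoc, one_mul, Matrix.trace_sub, Matrix.trace_add,
    Matrix.trace_smul, smul_eq_mul, hmax, hρtr] at key
  have hzero : (2 * (4 + (α : ℂ) ^ 2)) * 1 - 2 * ((4 + α ^ 2 : ℝ) : ℂ) = 0 := by
    push_cast
    ring
  rw [hzero] at key
  have keySum := key.symm
  rw [add_eq_zero_iff_of_nonneg (add_nonneg (add_nonneg (add_nonneg s₀ s₁) s₂) hA) hB,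
    add_eq_zero_iff_of_nonneg (add_nonneg (add_nonneg s₀ s₁) s₂) hA,
    add_eq_zero_iff_of_nonneg (add_nonneg s₀ s₁) s₂, add_eq_zero_iff_of_nonneg s₀ s₁] at keySum
  obtain ⟨⟨⟨⟨z₀, z₁⟩, z₂⟩, -⟩, -⟩ := keySum
  exact ⟨mul_eq_zero_of_trace_sq hL₀ hρ z₀, mul_eq_zero_of_trace_sq hL₁ hρ z₁,
    mul_eq_zero_of_trace_sq hL₂ hρ z₂⟩

end
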